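/- Let (y,1) ∈ S and (x,1) ∈ Fix(P_S ∘ T), and write T(x,1) = (x,λ) and T(y,1) = (w,μ). If ⟨(x,1) − P_S(T(y,1)), (y,1) − P_S(T(y,1))⟩ > 0, then (i) λ < μ < 1, and (ii) T(x,1) ≠ P_{cl dom κ}(x,1). -/

import Mathlib

/-!
Write `u = T z` and `r = ‖z - u‖`. Shrinking a point towards the origin strictly decreases a positive
finite gauge value (`exists_polarObj_lt`), so optimality forces `κ u ≤ r`
(`IsPolarProx.gauge_le`), and `u` is the metric projection of `z` onto the sublevel set `{κ ≤ r}`: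
`⟪z - u, v - u⟫ ≤ 0` whenever `κ v ≤ r` (`IsPolarProx.inner_le_zero`).

At `(x, 1)` the projection inequality reads `(1 - λ)(v₂ - λ) ≤ 0`, and `v = 0` gives
`λ ≤ 1`, so the radius is `1 - λ`. Let `r` be the radius at `(y, 1)`. If `r < 1 - λ`, then
`1 - μ ≤ r < 1 - λ`, whereas the projection inequality at `(x, 1)` tested with `(w, μ)` gives
`μ ≤ λ`, a contradiction. So `1 - λ ≤ r`, and the inequality at `(y, 1)` tested with `(x, λ)` gives
`⟪y - w, x - w⟫ + (1 - μ)(λ - μ) ≤ 0`. The first term is positive and `λ ≤ 1`, hence `λ < μ < 1`.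

If `(x, λ)` were also the projection of `(x, 1)` onto the closure of `dom κ`, testing with
`(w, μ) ∈ dom κ` would give `μ ≤ λ` again.
-/

open scoped ENNReal RealInnerProductSpace Pointwise Topology
open Filter

noncomputable section

variable {X : Type*} [NormedAddCommGroup X] [InnerProductSpace ℝ X] [FiniteDimensional ℝ X]

/-- The point `(x, t)` of the lifted space `E = X ×₂ ℝ` (Euclidean product). -/
def pt (x : X) (t : ℝ) : WithLp 2 (X × ℝ) := (WithLp.equiv 2 (X × ℝ)).symm (x, t)

/-- First (`X`-) coordinate of a point of the lifted space. -/
def fstE (z : WithLp 2 (X × ℝ)) : X := (WithLp.equiv 2 (X × ℝ) z).1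

/-- Second (`ℝ`-) coordinate of a point of the lifted space. -/
def sndE (z : WithLp 2 (X × ℝ)) : ℝ := (WithLp.equiv 2 (X × ℝ) z).2

/-- Orthogonal projection `P_S` onto the affine subspace `S = X × {1}`. -/
def PS (z : WithLp 2 (X × ℝ)) : WithLp 2 (X × ℝ) := pt (fstE z) 1

/-- A closed gauge: a convex, lower semicontinuous, positively homogeneous
function `κ : E → [0,∞]` on the lifted space. -/
def IsClosedGauge (κ : WithLp 2 (X × ℝ) → ℝ≥0∞) : Prop :=
  LowerSemicontinuous κ ∧
  (∀ z w : WithLp 2 (X × ℝ), ∀ a b : ℝ, 0 ≤ a → 0 ≤ b → a + b = 1 →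
    κ (a • z + b • w) ≤ ENNReal.ofReal a * κ z + ENNReal.ofReal b * κ w) ∧
  (∀ t : ℝ, 0 ≤ t → ∀ z, κ (t • z) = ENNReal.ofReal t * κ z)

/-- The objective `u ↦ max {κ(u), ‖z − u‖}` defining the polar proximal map. -/
def polarObj (κ : WithLp 2 (X × ℝ) → ℝ≥0∞) (z u : WithLp 2 (X × ℝ)) : ℝ≥0∞ :=
  max (κ u) (ENNReal.ofReal ‖z - u‖)

/-- `T` is the polar proximal map of `κ`: for every `z`, `T z` is the unique
minimizer of `u ↦ max {κ(u), ‖z − u‖}`. -/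
def IsPolarProx (κ : WithLp 2 (X × ℝ) → ℝ≥0∞)
    (T : WithLp 2 (X × ℝ) → WithLp 2 (X × ℝ)) : Prop :=
  ∀ z, (∀ u, polarObj κ z (T z) ≤ polarObj κ z u) ∧
    (∀ u, (∀ v, polarObj κ z u ≤ polarObj κ z v) → u = T z)

/-- Variational inequality for a point `u` that is nearest to `z` on the segment from `u` to `v`. -/
lemma inner_le_zero_of_forall_segment {E : Type*} [NormedAddCommGroup E] [InnerProductSpace ℝ E]
    (z u v : E)
    (h : ∀ a b : ℝ, 0 ≤ a → 0 ≤ b → a + b = 1 → ‖z - u‖ ≤ ‖z - (a • v + b • u)‖) :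
    ⟪z - u, v - u⟫ ≤ 0 := by
  have hu : u ∈ segment ℝ v u := right_mem_segment ℝ v u
  refine (norm_eq_iInf_iff_real_inner_le_zero (convex_segment v u) hu).1 ?_ v
    (left_mem_segment ℝ v u)
  have : Nonempty (segment ℝ v u) := ⟨⟨u, hu⟩⟩
  refine le_antisymm (le_ciInf ?_) (ciInf_le ⟨0, ?_⟩ (⟨u, hu⟩ : segment ℝ v u))
  · rintro ⟨_, a, b, ha, hb, hab, rfl⟩
    exact h a b ha hb hab
  · rintro _ ⟨q, rfl⟩
    exact norm_nonneg _

/-- If `κ v ≤ k` and `‖z - v‖ < k`, a slight shrinking of `v` has objective value strictly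
below `k`. -/
lemma exists_polarObj_lt {κ : WithLp 2 (X × ℝ) → ℝ≥0∞} (hκ : IsClosedGauge κ)
    {z v : WithLp 2 (X × ℝ)} {k : ℝ} (hv : κ v ≤ ENNReal.ofReal k) (hk : ‖z - v‖ < k) :
    ∃ v', polarObj κ z v' < ENNReal.ofReal k := by
  have hk0 : 0 < k := (norm_nonneg _).trans_lt hk
  -- `s` is chosen so that moving from `v` to `(1 - s) • v` costs `s * ‖v‖ < k - ‖z - v‖`
  set d : ℝ := k - ‖z - v‖ with hd
  have hd0 : 0 < d := sub_pos.2 hk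
  have hn : 0 ≤ ‖v‖ := norm_nonneg v
  set s : ℝ := d / (d + ‖v‖) with hs
  have hs0 : 0 < s := by positivity
  have hs1 : s ≤ 1 := (div_le_one (by positivity)).2 (by linarith)
  have hsd : s * (d + ‖v‖) = d := div_mul_cancel₀ _ (by positivity)
  have hsv : s * ‖v‖ < d := by nlinarith [mul_pos hs0 hd0]
  refine ⟨(1 - s) • v, max_lt ?_ ?_⟩
  · rw [hκ.2.2 _ (by linarith)]
    refine (mul_le_mul_right hv _).trans_lt ?_
    rw [← ENNReal.ofReal_mul (by linarith)]
    exact (ENNReal.ofReal_lt_ofReal_iff hk0).2 (by nlinarith)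
  · refine (ENNReal.ofReal_lt_ofReal_iff hk0).2 ?_
    have h1 : z - (1 - s) • v = (z - v) + s • v := by module
    have h2 := norm_add_le (z - v) (s • v)
    rw [norm_smul, Real.norm_of_nonneg hs0.le] at h2
    rw [h1]
    linarith

lemma IsClosedGauge.map_zero {κ : WithLp 2 (X × ℝ) → ℝ≥0∞} (hκ : IsClosedGauge κ) : κ 0 = 0 := by
  simpa using hκ.2.2 0 le_rfl 0

/-- At the polar proximal point the distance term attains the maximum. -/
lemma IsPolarProx.gauge_le {κ : WithLp 2 (X × ℝ) → ℝ≥0∞} (hκ : IsClosedGauge κ)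
    {T : WithLp 2 (X × ℝ) → WithLp 2 (X × ℝ)} (hT : IsPolarProx κ T) (z : WithLp 2 (X × ℝ)) :
    κ (T z) ≤ ENNReal.ofReal ‖z - T z‖ := by
  have hfin : κ (T z) ≠ ⊤ := by
    have h := (le_max_left _ _).trans ((hT z).1 0)
    rw [polarObj, hκ.map_zero] at h
    exact ne_top_of_le_ne_top (by simp) h
  by_contra! hlt
  have hk := ENNReal.ofReal_toReal hfin
  obtain ⟨v', hv'⟩ := exists_polarObj_lt hκ hk.ge ((ENNReal.ofReal_lt_iff_lt_toReal
    (norm_nonneg _) hfin).1 hlt)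
  rw [hk] at hv'
  exact absurd ((le_max_left _ _).trans ((hT z).1 v')) hv'.not_ge

/-- The polar proximal point `T z` is the projection of `z` onto the sublevel set of `κ` at
height `‖z - T z‖`. -/
lemma IsPolarProx.inner_le_zero {κ : WithLp 2 (X × ℝ) → ℝ≥0∞} (hκ : IsClosedGauge κ)
    {T : WithLp 2 (X × ℝ) → WithLp 2 (X × ℝ)} (hT : IsPolarProx κ T) (z v : WithLp 2 (X × ℝ))
    (hv : κ v ≤ ENNReal.ofReal ‖z - T z‖) : ⟪z - T z, v - T z⟫ ≤ 0 := by
  refine inner_le_zero_of_forall_segment z (T z) v fun a b ha hb hab => ?_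
  have hcomb : κ (a • v + b • T z) ≤ ENNReal.ofReal ‖z - T z‖ := by
    refine (hκ.2.1 v (T z) a b ha hb hab).trans ?_
    calc ENNReal.ofReal a * κ v + ENNReal.ofReal b * κ (T z)
        ≤ ENNReal.ofReal a * ENNReal.ofReal ‖z - T z‖
          + ENNReal.ofReal b * ENNReal.ofReal ‖z - T z‖ := by
          gcongr
          exact hT.gauge_le hκ z
      _ = ENNReal.ofReal ‖z - T z‖ := by
          rw [← add_mul, ← ENNReal.ofReal_add ha hb, hab, ENNReal.ofReal_one, one_mul]
  by_contra! hlt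
  obtain ⟨v', hv'⟩ := exists_polarObj_lt hκ hcomb hlt
  exact absurd ((le_max_right _ _).trans ((hT z).1 v')) hv'.not_ge

lemma pt_sub_pt (a b : X) (s t : ℝ) : pt a s - pt b t = pt (a - b) (s - t) := rfl

lemma inner_pt_pt (a b : X) (s t : ℝ) : ⟪pt a s, pt b t⟫ = ⟪a, b⟫ + s * t := by
  simp [pt, WithLp.prod_inner_apply, mul_comm]

lemma abs_le_norm_pt (a : X) (t : ℝ) : |t| ≤ ‖pt a t‖ := by
  have h := inner_pt_pt a a t t
  rw [real_inner_self_eq_norm_sq, real_inner_self_eq_norm_sq] at h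
  exact abs_le_of_sq_le_sq (by nlinarith [sq_nonneg ‖a‖]) (norm_nonneg _)

lemma norm_pt_zero (t : ℝ) : ‖pt (0 : X) t‖ = |t| := by
  have h := inner_pt_pt (0 : X) 0 t t
  rw [real_inner_self_eq_norm_sq, inner_zero_left, zero_add, ← sq] at h
  rw [← abs_norm]
  exact (sq_eq_sq_iff_abs_eq_abs _ _).1 h

lemma PS_pt (a : X) (t : ℝ) : PS (pt a t) = pt a 1 := rfl

/-- If `(y,1) ∈ S`, `(x,1) ∈ Fix (P_S ∘ T)`, `T(x,1) = (x,λ)`,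
`T(y,1) = (w,μ)` and `⟨(x,1) − P_S(T(y,1)), (y,1) − P_S(T(y,1))⟩ > 0`, then
`λ < μ < 1` and `T(x,1) ≠ P_{cl dom κ}(x,1)`. -/
theorem PS_comp_polarProx_not_cutter_conditions
    (κ : WithLp 2 (X × ℝ) → ℝ≥0∞) (hκ : IsClosedGauge κ)
    (T : WithLp 2 (X × ℝ) → WithLp 2 (X × ℝ)) (hT : IsPolarProx κ T)
    (Pdom : WithLp 2 (X × ℝ) → WithLp 2 (X × ℝ))
    (hPdom : ∀ z, Pdom z ∈ closure {w : WithLp 2 (X × ℝ) | κ w ≠ ⊤} ∧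
      ∀ w ∈ closure {w : WithLp 2 (X × ℝ) | κ w ≠ ⊤}, ‖z - Pdom z‖ ≤ ‖z - w‖)
    (y x : X) (hx : PS (T (pt x 1)) = pt x 1)
    (lam μ : ℝ) (w : X)
    (hlamrep : T (pt x 1) = pt x lam)
    (hmurep : T (pt y 1) = pt w μ)
    (hinner : 0 < ⟪pt x 1 - PS (T (pt y 1)), pt y 1 - PS (T (pt y 1))⟫) :
    lam < μ ∧ μ < 1 ∧ T (pt x 1) ≠ Pdom (pt x 1) := by
  rw [hmurep, PS_pt, pt_sub_pt, pt_sub_pt, inner_pt_pt, sub_self, mul_zero, add_zero] at hinner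
  have hgx := hT.gauge_le hκ (pt x 1)
  have hgy := hT.gauge_le hκ (pt y 1)
  have hvx := hT.inner_le_zero hκ (pt x 1)
  have hvy := hT.inner_le_zero hκ (pt y 1)
  rw [hlamrep, pt_sub_pt, sub_self, norm_pt_zero] at hgx hvx
  rw [hmurep, pt_sub_pt] at hgy hvy
  have hlam1 : lam ≤ 1 := by
    have h := hvx (pt 0 0) (by
      rw [show pt (0 : X) 0 = 0 from rfl, hκ.map_zero]
      exact zero_le)
    rw [pt_sub_pt, inner_pt_pt, inner_zero_left] at h
    nlinarith
  rw [abs_of_nonneg (sub_nonneg.2 hlam1)] at hgx hvx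
  have hr := (le_abs_self _).trans (abs_le_norm_pt (y - w) (1 - μ))
  have hrad : 1 - lam ≤ ‖pt (y - w) (1 - μ)‖ := by
    by_contra! hlt
    have h := hvx (pt w μ) (hgy.trans (ENNReal.ofReal_le_ofReal hlt.le))
    rw [pt_sub_pt, inner_pt_pt, inner_zero_left] at h
    have hpos : 0 < 1 - lam := (norm_nonneg _).trans_lt hlt
    nlinarith
  have hkey := hvy (pt x lam) (hgx.trans (ENNReal.ofReal_le_ofReal hrad))
  rw [pt_sub_pt, inner_pt_pt, real_inner_comm] at hkey
  have hneg : (1 - μ) * (lam - μ) < 0 := by linarith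
  have hμ1 : μ < 1 := by
    by_contra! h
    nlinarith
  have hlamμ : lam < μ := by
    by_contra! h
    nlinarith
  refine ⟨hlamμ, hμ1, fun heq => ?_⟩
  have hdx : κ (pt x lam) ≠ ⊤ := ne_top_of_le_ne_top ENNReal.ofReal_ne_top hgx
  have hdw : κ (pt w μ) ≠ ⊤ := ne_top_of_le_ne_top ENNReal.ofReal_ne_top hgy
  have hproj := inner_le_zero_of_forall_segment (pt x 1) (pt x lam) (pt w μ)
    fun a b ha hb hab => by
      have h := (hPdom (pt x 1)).2 (a • pt w μ + b • pt x lam) (subset_closure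
        (ne_top_of_le_ne_top
          (ENNReal.add_ne_top.2 ⟨ENNReal.mul_ne_top ENNReal.ofReal_ne_top hdw,
            ENNReal.mul_ne_top ENNReal.ofReal_ne_top hdx⟩)
          (hκ.2.1 (pt w μ) (pt x lam) a b ha hb hab)))
      rwa [← heq, hlamrep] at h
  rw [pt_sub_pt, pt_sub_pt, inner_pt_pt, sub_self, inner_zero_left, zero_add] at hproj
  nlinarith
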